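/- For the Kowalevski top on so*(4), the coefficients B_3 and B_1 of the entry B(λ) of the Lax matrix Poisson commute with respect to the Lie–Poisson bracket of so*(4): {B_3, B_1}_0 = 0 as rational functions of (x_1,x_2,x_3,J_1,J_2,J_3); equivalently, {B(λ), B(μ)}_0 = 0 for B(λ) = λ⁵ + B_3λ³ + B_1λ. -/

import Mathlib

/-!
STATEMENT 16: For the Kowalevski top on so*(4), the coefficients B_3 and B_1 of the entry
B(λ) = λ⁵ + B_3λ³ + B_1λ of the Lax matrix Poisson commute with respect to the Lie–Poisson
bracket of so*(4): {B_3, B_1}_0 = 0; equivalently {B(λ), B(μ)}_0 = 0.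
-/

set_option maxHeartbeats 1000000

noncomputable section

/-- The field ℂ(x_1,x_2,x_3,J_1,J_2,J_3) of rational functions in six variables. -/
abbrev Kw := FractionRing (MvPolynomial (Fin 6) ℂ)

/-- The coordinates: `zz 0, zz 1, zz 2` are x_1, x_2, x_3 and `zz 3, zz 4, zz 5`
are J_1, J_2, J_3. -/
noncomputable def zz (i : Fin 6) : Kw :=
  algebraMap (MvPolynomial (Fin 6) ℂ) Kw (MvPolynomial.X i)

/-- The constants ℂ ⊆ ℂ(x_1,…,J_3). -/
noncomputable def cc (w : ℂ) : Kw := algebraMap ℂ Kw w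

/-- X = (J_1J_3 + b x_3)/J_2. -/
noncomputable def KX (b : ℂ) : Kw := (zz 3 * zz 5 + cc b * zz 2) / zz 4

/-- H_1 = J_1² + J_2² + 2J_3² − 2b x_1. -/
noncomputable def KH1 (b : ℂ) : Kw := zz 3 ^ 2 + zz 4 ^ 2 + 2 * zz 5 ^ 2 - cc (2 * b) * zz 0

/-- H_2 = (J_+² + 2b x_+ − 𝒫b²)(J_−² + 2b x_− − 𝒫b²). -/
noncomputable def KH2 (b P : ℂ) : Kw :=
  ((zz 3 + cc Complex.I * zz 4) ^ 2 + cc (2 * b) * (zz 0 + cc Complex.I * zz 1)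
      - cc (P * b ^ 2)) *
    ((zz 3 - cc Complex.I * zz 4) ^ 2 + cc (2 * b) * (zz 0 - cc Complex.I * zz 1)
      - cc (P * b ^ 2))

/-- Q_1 = x_2J_3 − x_3J_2. -/
noncomputable def KQ1 : Kw := zz 1 * zz 5 - zz 2 * zz 4
/-- Q_2 = x_3J_1 − x_1J_3. -/
noncomputable def KQ2 : Kw := zz 2 * zz 3 - zz 0 * zz 5
/-- Q_3 = x_1J_2 − x_2J_1. -/
noncomputable def KQ3 : Kw := zz 0 * zz 4 - zz 1 * zz 3

/-- Z_1 = x_3J_3 − x_2J_2 − 2x_1J_1 + x_2(J_1²−2J_3²)/J_2 + (J_3(b𝒫−2x_1)+x_3J_1)X/J_2. -/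
noncomputable def KZ1 (b P : ℂ) : Kw :=
  zz 2 * zz 5 - zz 1 * zz 4 - 2 * zz 0 * zz 3 + zz 1 * (zz 3 ^ 2 - 2 * zz 5 ^ 2) / zz 4
    + (zz 5 * (cc (b * P) - 2 * zz 0) + zz 2 * zz 3) * KX b / zz 4

/-- Z_2 = b²𝒫² + (H_1 − J_3²)𝒫. -/
noncomputable def KZ2 (b P : ℂ) : Kw := cc (b ^ 2 * P ^ 2) + (KH1 b - zz 5 ^ 2) * cc P

/-- 𝒞_1 = x_1J_1 + x_2J_2 + x_3J_3. -/
noncomputable def KC1 : Kw := zz 0 * zz 3 + zz 1 * zz 4 + zz 2 * zz 5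

/-- 𝒞_2 = x_1² + x_2² + x_3² − 𝒫(J_1² + J_2² + J_3²). -/
noncomputable def KC2 (P : ℂ) : Kw :=
  zz 0 ^ 2 + zz 1 ^ 2 + zz 2 ^ 2 - cc P * (zz 3 ^ 2 + zz 4 ^ 2 + zz 5 ^ 2)

/-- `D` is the Lie–Poisson bracket of so*(4): an antisymmetric biderivation of the field
ℂ(x_1,…,J_3) with {J_i,J_j}_0 = ε_{ijk}J_k, {J_i,x_j}_0 = ε_{ijk}x_k,
{x_i,x_j}_0 = −𝒫 ε_{ijk}J_k. -/
def IsKowBr0 (P : ℂ) (D : Kw → Derivation ℂ Kw Kw) : Prop :=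
  (∀ f g : Kw, D f g = -(D g f)) ∧
  D (zz 3) (zz 4) = zz 5 ∧ D (zz 4) (zz 5) = zz 3 ∧ D (zz 5) (zz 3) = zz 4 ∧
  D (zz 3) (zz 0) = 0 ∧ D (zz 3) (zz 1) = zz 2 ∧ D (zz 3) (zz 2) = -(zz 1) ∧
  D (zz 4) (zz 0) = -(zz 2) ∧ D (zz 4) (zz 1) = 0 ∧ D (zz 4) (zz 2) = zz 0 ∧
  D (zz 5) (zz 0) = zz 1 ∧ D (zz 5) (zz 1) = -(zz 0) ∧ D (zz 5) (zz 2) = 0 ∧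
  D (zz 0) (zz 1) = -(cc P * zz 5) ∧ D (zz 1) (zz 2) = -(cc P * zz 3) ∧
  D (zz 2) (zz 0) = -(cc P * zz 4)

/-- `D` is the second Kowalevski bracket {·,·}_1: an antisymmetric biderivation of the
field ℂ(x_1,…,J_3) with the indicated values on the coordinates. -/
def IsKowBr1 (b P : ℂ) (D : Kw → Derivation ℂ Kw Kw) : Prop :=
  (∀ f g : Kw, D f g = -(D g f)) ∧
  D (zz 3) (zz 4) = -(zz 5) * KX b ^ 2 - cc b * (zz 2 * zz 3 + zz 1 * KX b) ∧
  D (zz 3) (zz 5) = zz 4 * KX b ^ 2 - cc b * (zz 2 * zz 4 - zz 1 * zz 5) * KX b / zz 4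
      + cc b * zz 1 * (2 * zz 3 * zz 4 + cc b * zz 1) / zz 4 ∧
  D (zz 4) (zz 5) = -(zz 3) * KX b ^ 2 - cc b * (zz 0 * zz 3 + zz 2 * zz 5)
      - cc b * zz 1 * (zz 3 ^ 2 - zz 5 ^ 2 + cc b * zz 0) / zz 4 ∧
  D (zz 0) (zz 3) = -(2 * KQ1 * (cc b * (zz 1 * zz 4 + zz 2 * zz 5)
      + (zz 4 ^ 2 + zz 5 ^ 2) * zz 3)) / zz 4 ^ 2 ∧
  D (zz 0) (zz 4) = -(zz 2) * KX b ^ 2 + cc (b * P) * zz 4 * KX b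
      + (KQ1 * (2 * zz 3 ^ 2 - KH1 b) - cc b * zz 1 * zz 2 * zz 3) / zz 4 ∧
  D (zz 0) (zz 5) = zz 1 * KX b ^ 2 - cc (b * P) * (zz 3 * zz 4 + cc b * zz 1)
      + (KQ1 * (zz 3 * KX b + zz 4 * zz 5) + cc b * zz 1 ^ 2 * zz 3) / zz 4 ∧
  D (zz 1) (zz 3) = -(zz 2) * zz 3 ^ 2 - (cc b * zz 1 + zz 5 * KX b + zz 3 * zz 4)
      * ((cc (b * P) - 2 * zz 0) * zz 5 + zz 2 * zz 3) / zz 4 ∧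
  D (zz 1) (zz 4) = -(KQ2 * (KH1 b - zz 3 ^ 2 + cc (b ^ 2 * P))
      + cc b * zz 5 * (cc P * zz 5 ^ 2 + zz 2 ^ 2)) / zz 4 ∧
  D (zz 1) (zz 5) = cc (b * P) * (zz 3 ^ 2 + zz 5 ^ 2)
      + (KQ2 * (zz 4 * zz 5 + zz 3 * KX b)
        + (cc (b * P) - zz 0) * (cc b * zz 1 + zz 5 * KX b) * zz 3
        + cc b * zz 1 * zz 2 * zz 5) / zz 4 ∧
  D (zz 2) (zz 3) = zz 1 * zz 3 ^ 2
      + (cc b * (zz 1 * zz 4 + zz 2 * zz 5) + (zz 4 ^ 2 + zz 5 ^ 2) * zz 3)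
        * (cc (b * P) - 2 * zz 0 + zz 1 * zz 3 / zz 4) / zz 4 ∧
  D (zz 2) (zz 4) = zz 0 * KX b ^ 2 - cc (b * P) * (cc b * zz 0 + zz 3 ^ 2 - zz 5 ^ 2)
      + (KQ3 * (2 * zz 3 ^ 2 - KH1 b) + cc b * zz 1 * (zz 0 * zz 3 + zz 2 * zz 5)) / zz 4 ∧
  D (zz 2) (zz 5) = (KQ3 - cc (b * P) * zz 4) * (zz 4 * zz 5 + zz 3 * KX b) / zz 4
      - cc b * zz 1 * (zz 0 * KX b + zz 1 * zz 5) / zz 4 ∧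
  D (zz 0) (zz 1) = KZ1 b P * zz 2 - KZ2 b P * zz 5 - cc (b * P) * zz 3 * KQ1 / zz 4 ∧
  D (zz 0) (zz 2) = -(KZ1 b P * zz 1 - KZ2 b P * zz 4) + cc (b * P) * KX b * KQ1 / zz 4 ∧
  D (zz 1) (zz 2) = KZ1 b P * zz 0 - KZ2 b P * zz 3 + cc (b * P) * (zz 0 * zz 3 - zz 2 * zz 5)
      - cc (b * P) * zz 1 * (zz 3 ^ 2 - zz 5 ^ 2) / zz 4


/-- B_3 = X² − J² + 2bx_1 − 𝒫b². -/
noncomputable def KB3 (b P : ℂ) : Kw :=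
  KX b ^ 2 - (zz 3 ^ 2 + zz 4 ^ 2 + zz 5 ^ 2) + cc (2 * b) * zz 0 - cc (P * b ^ 2)

/-- B_1 = −J²X² − 2b(x_2J_3−x_3J_2)X − 2b𝒞_1J_1 − b²(x_2²+x_3²−𝒫J_1²). -/
noncomputable def KB1 (b P : ℂ) : Kw :=
  -((zz 3 ^ 2 + zz 4 ^ 2 + zz 5 ^ 2) * KX b ^ 2)
    - cc (2 * b) * (zz 1 * zz 5 - zz 2 * zz 4) * KX b - cc (2 * b) * KC1 * zz 3
    - cc (b ^ 2) * (zz 1 ^ 2 + zz 2 ^ 2 - cc P * zz 3 ^ 2)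

/-- B(λ) = λ⁵ + B_3λ³ + B_1λ. -/
noncomputable def KB (b P : ℂ) (lam : ℂ) : Kw :=
  cc lam ^ 5 + KB3 b P * cc lam ^ 3 + KB1 b P * cc lam

/-!
Put `Y = J₁J₂ + b x₂ + X J₃`. The relation `J₂X = J₁J₃ + b x₃` turns `B₁` into
`B₁ = -Y² - J₁²(B₃ + J₁²)`, so it suffices to know how `B₃` acts on `J₁` and `Y`, and indeed
`J₂{J₁, B₃} = -2XY` and `J₂{Y, B₃} = 2X J₁(B₃ + 2J₁²)`. The two contributions to `J₂{B₃, B₁}`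
then cancel.
-/

section Biderivation

variable {R A : Type*} [CommRing R] [CommRing A] [Algebra R A] {D : A → Derivation R A A}

/-- A Casimir element of the bracket `{f, g} = D f g`, i.e. one that commutes with everything. -/
def IsCasimir (D : A → Derivation R A A) (c : A) : Prop :=
  ∀ f, D f c = 0

theorem bracket_self [IsAddTorsionFree A] (hD : ∀ f g, D f g = -(D g f)) (f : A) : D f f = 0 :=
  self_eq_neg.mp (hD f f)

theorem IsCasimir.bracket_pencil {c : A} (hc : IsCasimir D c) (p q f : A) :
    D f (c ^ 5 + p * c ^ 3 + q * c) = c ^ 3 * D f p + c * D f q := by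
  simp only [map_add, Derivation.leibniz, Derivation.leibniz_pow, hc f, smul_eq_mul, smul_zero,
    mul_zero, zero_add]

theorem bracket_pencil_pencil_eq_zero [IsAddTorsionFree A] (hD : ∀ f g, D f g = -(D g f))
    {p q c d : A} (hpq : D p q = 0) (hc : IsCasimir D c) (hd : IsCasimir D d) :
    D (c ^ 5 + p * c ^ 3 + q * c) (d ^ 5 + p * d ^ 3 + q * d) = 0 := by
  have hqp : D q p = 0 := by rw [hD, hpq, neg_zero]
  rw [hd.bracket_pencil, hD _ p, hD _ q, hc.bracket_pencil, hc.bracket_pencil]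
  simp only [bracket_self hD, hpq, hqp, mul_zero, add_zero, neg_zero]

end Biderivation

/-- The variables of the Kowalevski top in a commutative ring: the parameters `b`, `P`, the
coordinates `xᵢ`, `Jᵢ`, and `X`, which is characterised by `J₂X = J₁J₃ + b x₃` to avoid
dividing by `J₂`. -/
structure KowalevskiTop (A : Type*) [CommRing A] where
  (b P x₁ x₂ x₃ J₁ J₂ J₃ X : A)
  J₂_mul_X : J₂ * X = J₁ * J₃ + b * x₃

namespace KowalevskiTop

variable {R A : Type*} [CommRing R] [CommRing A] [Algebra R A]

/-- The coefficient `B₃` of the Lax matrix entry `B(λ) = λ⁵ + B₃λ³ + B₁λ`. -/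
def B₃ (K : KowalevskiTop A) : A :=
  K.X ^ 2 - (K.J₁ ^ 2 + K.J₂ ^ 2 + K.J₃ ^ 2) + 2 * K.b * K.x₁ - K.P * K.b ^ 2

/-- The coefficient `B₁` of the Lax matrix entry `B(λ) = λ⁵ + B₃λ³ + B₁λ`. -/
def B₁ (K : KowalevskiTop A) : A :=
  -((K.J₁ ^ 2 + K.J₂ ^ 2 + K.J₃ ^ 2) * K.X ^ 2) - 2 * K.b * (K.x₂ * K.J₃ - K.x₃ * K.J₂) * K.X
    - 2 * K.b * (K.x₁ * K.J₁ + K.x₂ * K.J₂ + K.x₃ * K.J₃) * K.J₁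
    - K.b ^ 2 * (K.x₂ ^ 2 + K.x₃ ^ 2 - K.P * K.J₁ ^ 2)

/-- The function `Y = J₁J₂ + b x₂ + X J₃ = J₂{X, J₁}`. Up to sign, its square is the value of
`t² + B₃t + B₁` at `t = J₁²`. -/
def Y (K : KowalevskiTop A) : A :=
  K.J₁ * K.J₂ + K.b * K.x₂ + K.X * K.J₃

theorem B₁_eq_neg_Y_sq_sub (K : KowalevskiTop A) :
    K.B₁ = -K.Y ^ 2 - K.J₁ ^ 2 * (K.B₃ + K.J₁ ^ 2) := by
  unfold B₁ B₃ Y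
  linear_combination (K.b * K.x₃ + K.J₁ * K.J₃ - K.J₂ * K.X) * K.J₂_mul_X

/-- `D` is the Lie–Poisson bracket of so*(4) in the coordinates of `K`, with `b` and `P`
as Casimir elements. -/
structure IsLiePoisson (K : KowalevskiTop A) (D : A → Derivation R A A) : Prop where
  antisymm : ∀ f g, D f g = -(D g f)
  isCasimir_b : IsCasimir D K.b
  isCasimir_P : IsCasimir D K.P
  J₁_J₂ : D K.J₁ K.J₂ = K.J₃
  J₂_J₃ : D K.J₂ K.J₃ = K.J₁
  J₃_J₁ : D K.J₃ K.J₁ = K.J₂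
  J₁_x₁ : D K.J₁ K.x₁ = 0
  J₁_x₂ : D K.J₁ K.x₂ = K.x₃
  J₁_x₃ : D K.J₁ K.x₃ = -K.x₂
  J₂_x₁ : D K.J₂ K.x₁ = -K.x₃
  J₂_x₂ : D K.J₂ K.x₂ = 0
  J₂_x₃ : D K.J₂ K.x₃ = K.x₁
  J₃_x₁ : D K.J₃ K.x₁ = K.x₂
  J₃_x₂ : D K.J₃ K.x₂ = -K.x₁
  J₃_x₃ : D K.J₃ K.x₃ = 0
  x₁_x₂ : D K.x₁ K.x₂ = -(K.P * K.J₃)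
  x₂_x₃ : D K.x₂ K.x₃ = -(K.P * K.J₁)
  x₃_x₁ : D K.x₃ K.x₁ = -(K.P * K.J₂)

namespace IsLiePoisson

variable {K : KowalevskiTop A} {D : A → Derivation R A A}

theorem J₂_mul_bracket_X (h : K.IsLiePoisson D) (f : A) :
    K.J₂ * D f K.X
      = K.J₁ * D f K.J₃ + K.J₃ * D f K.J₁ + K.b * D f K.x₃ - K.X * D f K.J₂ := by
  have leibniz := congrArg (D f) K.J₂_mul_X
  simp only [map_add, Derivation.leibniz, smul_eq_mul, h.isCasimir_b f] at leibniz
  linear_combination leibniz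

theorem bracket_Y (h : K.IsLiePoisson D) (f : A) :
    D f K.Y
      = K.J₁ * D f K.J₂ + K.J₂ * D f K.J₁ + K.b * D f K.x₂ + K.X * D f K.J₃ + K.J₃ * D f K.X := by
  simp only [Y, map_add, Derivation.leibniz, smul_eq_mul, h.isCasimir_b f]
  ring

theorem bracket_B₃ (h : K.IsLiePoisson D) (f : A) :
    D f K.B₃
      = 2 * K.X * D f K.X - 2 * (K.J₁ * D f K.J₁ + K.J₂ * D f K.J₂ + K.J₃ * D f K.J₃)
        + 2 * K.b * D f K.x₁ := by
  have bracket_two : D f 2 = 0 := mod_cast (D f).map_natCast 2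
  simp only [B₃, pow_two, map_add, map_sub, Derivation.leibniz, smul_eq_mul, bracket_two,
    h.isCasimir_b f, h.isCasimir_P f]
  ring

theorem J₂_mul_bracket_x₁_X (h : K.IsLiePoisson D) :
    K.J₂ * D K.x₁ K.X = K.b * K.P * K.J₂ - K.J₁ * K.x₂ - K.X * K.x₃ := by
  rw [h.J₂_mul_bracket_X, h.antisymm K.x₁ K.J₃, h.J₃_x₁, h.antisymm K.x₁ K.J₁, h.J₁_x₁,
    h.antisymm K.x₁ K.x₃, h.x₃_x₁, h.antisymm K.x₁ K.J₂, h.J₂_x₁]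
  ring

theorem J₂_mul_bracket_x₂_X (h : K.IsLiePoisson D) :
    K.J₂ * D K.x₂ K.X = K.J₁ * K.x₁ - K.J₃ * K.x₃ - K.b * K.P * K.J₁ := by
  rw [h.J₂_mul_bracket_X, h.antisymm K.x₂ K.J₃, h.J₃_x₂, h.antisymm K.x₂ K.J₁, h.J₁_x₂,
    h.x₂_x₃, h.antisymm K.x₂ K.J₂, h.J₂_x₂]
  ring

theorem J₂_mul_bracket_x₁_Y (h : K.IsLiePoisson D) :
    K.J₂ * D K.x₁ K.Y
      = K.J₁ * (K.x₃ * K.J₂ - K.x₂ * K.J₃) - K.X * (K.x₂ * K.J₂ + K.x₃ * K.J₃) := by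
  rw [h.bracket_Y, h.antisymm K.x₁ K.J₁, h.J₁_x₁, h.antisymm K.x₁ K.J₂, h.J₂_x₁,
    h.antisymm K.x₁ K.J₃, h.J₃_x₁, h.x₁_x₂]
  linear_combination K.J₃ * h.J₂_mul_bracket_x₁_X

variable [IsAddTorsionFree A]

theorem J₂_mul_bracket_J₁_X (h : K.IsLiePoisson D) : K.J₂ * D K.J₁ K.X = -K.Y := by
  rw [h.J₂_mul_bracket_X, h.antisymm K.J₁ K.J₃, h.J₃_J₁, bracket_self h.antisymm, h.J₁_x₃,
    h.J₁_J₂, Y]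
  ring

theorem J₂_mul_bracket_J₂_X (h : K.IsLiePoisson D) :
    K.J₂ * D K.J₂ K.X = K.J₁ ^ 2 - K.J₃ ^ 2 + K.b * K.x₁ := by
  rw [h.J₂_mul_bracket_X, h.J₂_J₃, h.antisymm K.J₂ K.J₁, h.J₁_J₂, h.J₂_x₃,
    bracket_self h.antisymm]
  ring

theorem J₂_mul_bracket_J₃_X (h : K.IsLiePoisson D) :
    K.J₂ * D K.J₃ K.X = K.J₂ * K.J₃ + K.X * K.J₁ := by
  rw [h.J₂_mul_bracket_X, bracket_self h.antisymm, h.J₃_J₁, h.J₃_x₃, h.antisymm K.J₃ K.J₂,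
    h.J₂_J₃]
  ring

theorem J₂_mul_bracket_X_Y (h : K.IsLiePoisson D) :
    K.J₂ * D K.X K.Y
      = K.b * (K.x₂ * K.J₂ + K.x₃ * K.J₃) - K.J₁ * (K.B₃ + 2 * K.J₁ ^ 2) := by
  rw [h.bracket_Y, bracket_self h.antisymm, h.antisymm K.X K.J₁, h.antisymm K.X K.J₂,
    h.antisymm K.X K.J₃, h.antisymm K.X K.x₂, B₃]
  have hJ₁ := h.J₂_mul_bracket_J₁_X
  rw [Y] at hJ₁
  linear_combination -K.J₂ * hJ₁ - K.J₁ * h.J₂_mul_bracket_J₂_X - K.X * h.J₂_mul_bracket_J₃_X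
    - K.b * h.J₂_mul_bracket_x₂_X

theorem J₂_mul_sum_J_mul_bracket_J_Y (h : K.IsLiePoisson D) :
    K.J₂ * (K.J₁ * D K.J₁ K.Y + K.J₂ * D K.J₂ K.Y + K.J₃ * D K.J₃ K.Y)
      = K.b * K.J₁ * (K.x₃ * K.J₂ - K.x₂ * K.J₃) := by
  simp only [h.bracket_Y, bracket_self h.antisymm, h.antisymm K.J₂ K.J₁, h.antisymm K.J₁ K.J₃,
    h.antisymm K.J₃ K.J₂, h.J₁_J₂, h.J₂_J₃, h.J₃_J₁, h.J₁_x₂, h.J₂_x₂, h.J₃_x₂]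
  have hJ₁ := h.J₂_mul_bracket_J₁_X
  rw [Y] at hJ₁
  linear_combination K.J₃ * (K.J₁ * hJ₁ + K.J₂ * h.J₂_mul_bracket_J₂_X
    + K.J₃ * h.J₂_mul_bracket_J₃_X)

theorem J₂_mul_bracket_J₁_B₃ (h : K.IsLiePoisson D) :
    K.J₂ * D K.J₁ K.B₃ = -2 * K.X * K.Y := by
  rw [h.bracket_B₃, bracket_self h.antisymm, h.J₁_J₂, h.antisymm K.J₁ K.J₃, h.J₃_J₁, h.J₁_x₁]
  linear_combination 2 * K.X * h.J₂_mul_bracket_J₁_X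

theorem J₂_mul_bracket_Y_B₃ (h : K.IsLiePoisson D) :
    K.J₂ * D K.Y K.B₃ = 2 * K.X * K.J₁ * (K.B₃ + 2 * K.J₁ ^ 2) := by
  rw [h.bracket_B₃, h.antisymm K.Y K.X, h.antisymm K.Y K.J₁, h.antisymm K.Y K.J₂,
    h.antisymm K.Y K.J₃, h.antisymm K.Y K.x₁]
  linear_combination -2 * K.X * h.J₂_mul_bracket_X_Y + 2 * h.J₂_mul_sum_J_mul_bracket_J_Y
    - 2 * K.b * h.J₂_mul_bracket_x₁_Y

theorem bracket_B₃_B₁_eq_zero (h : K.IsLiePoisson D) (hJ₂ : IsLeftRegular K.J₂) :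
    D K.B₃ K.B₁ = 0 := by
  have leibniz : D K.B₃ K.B₁
      = 2 * K.Y * D K.Y K.B₃ + 2 * K.J₁ * (K.B₃ + 2 * K.J₁ ^ 2) * D K.J₁ K.B₃ := by
    rw [B₁_eq_neg_Y_sq_sub, h.antisymm K.Y, h.antisymm K.J₁]
    simp only [pow_two, map_add, map_sub, map_neg, Derivation.leibniz, smul_eq_mul,
      bracket_self h.antisymm]
    ring
  refine hJ₂ (show K.J₂ * D K.B₃ K.B₁ = K.J₂ * 0 from ?_)
  rw [leibniz]
  linear_combination 2 * K.Y * h.J₂_mul_bracket_Y_B₃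
    + 2 * K.J₁ * (K.B₃ + 2 * K.J₁ ^ 2) * h.J₂_mul_bracket_J₁_B₃

end IsLiePoisson

end KowalevskiTop

theorem statement16_general {R A : Type*} [CommRing R] [CommRing A] [Algebra R A]
    [IsAddTorsionFree A] {K : KowalevskiTop A} {D : A → Derivation R A A}
    (h : K.IsLiePoisson D) (hJ₂ : IsLeftRegular K.J₂) :
    D K.B₃ K.B₁ = 0 ∧
    ∀ c d : A, IsCasimir D c → IsCasimir D d →
      D (c ^ 5 + K.B₃ * c ^ 3 + K.B₁ * c) (d ^ 5 + K.B₃ * d ^ 3 + K.B₁ * d) = 0 :=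
  ⟨h.bracket_B₃_B₁_eq_zero hJ₂, fun _ _ hc hd =>
    bracket_pencil_pencil_eq_zero h.antisymm (h.bracket_B₃_B₁_eq_zero hJ₂) hc hd⟩

theorem zz_ne_zero (i : Fin 6) : zz i ≠ 0 :=
  (IsFractionRing.to_map_eq_zero_iff).not.mpr (MvPolynomial.X_ne_zero i)

theorem isCasimir_cc (D : Kw → Derivation ℂ Kw Kw) (w : ℂ) : IsCasimir D (cc w) :=
  fun f => (D f).map_algebraMap w

/-- The Kowalevski top in the field of rational functions `ℂ(x₁, x₂, x₃, J₁, J₂, J₃)`. -/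
def rationalTop (b P : ℂ) : KowalevskiTop Kw where
  b := cc b
  P := cc P
  x₁ := zz 0
  x₂ := zz 1
  x₃ := zz 2
  J₁ := zz 3
  J₂ := zz 4
  J₃ := zz 5
  X := KX b
  J₂_mul_X := mul_div_cancel₀ _ (zz_ne_zero 4)

theorem rationalTop_B₃ (b P : ℂ) : (rationalTop b P).B₃ = KB3 b P := by
  simp only [KowalevskiTop.B₃, rationalTop, KB3, cc, map_mul, map_pow, map_ofNat]

theorem rationalTop_B₁ (b P : ℂ) : (rationalTop b P).B₁ = KB1 b P := by
  simp only [KowalevskiTop.B₁, rationalTop, KB1, KC1, cc, map_mul, map_pow, map_ofNat]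

theorem IsKowBr0.isLiePoisson {P : ℂ} {D : Kw → Derivation ℂ Kw Kw} (h : IsKowBr0 P D) (b : ℂ) :
    (rationalTop b P).IsLiePoisson D := by
  obtain ⟨antisymm, J₁_J₂, J₂_J₃, J₃_J₁, J₁_x₁, J₁_x₂, J₁_x₃, J₂_x₁, J₂_x₂, J₂_x₃, J₃_x₁, J₃_x₂,
    J₃_x₃, x₁_x₂, x₂_x₃, x₃_x₁⟩ := h
  exact ⟨antisymm, isCasimir_cc D b, isCasimir_cc D P, J₁_J₂, J₂_J₃, J₃_J₁, J₁_x₁, J₁_x₂, J₁_x₃,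
    J₂_x₁, J₂_x₂, J₂_x₃, J₃_x₁, J₃_x₂, J₃_x₃, x₁_x₂, x₂_x₃, x₃_x₁⟩

theorem statement16 (b P : ℂ) (D0 : Kw → Derivation ℂ Kw Kw) (h0 : IsKowBr0 P D0) :
    D0 (KB3 b P) (KB1 b P) = 0 ∧
    ∀ lam mu : ℂ, D0 (KB b P lam) (KB b P mu) = 0 := by
  have general := statement16_general (h0.isLiePoisson b) (mul_right_injective₀ (zz_ne_zero 4))
  rw [rationalTop_B₃, rationalTop_B₁] at general
  exact ⟨general.1, fun lam mu => general.2 _ _ (isCasimir_cc D0 lam) (isCasimir_cc D0 mu)⟩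

end
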